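/- (Regret-to-suboptimality conversion with exact maximizers; core of the proof of Theorem 2.) Let K ≥ 1, let μ_1, …, μ_K ∈ P and λ_1, …, λ_K ∈ Λ_B satisfy L(μ, λ_k) ≤ L(μ_k, λ_k) for all μ ∈ P and all k (each μ_k exactly maximizes L(·, λ_k)), and suppose the average-regret bound (1/K)·Σ_{k=1}^K L(μ_k, λ_k) ≤ inf_{λ ∈ Λ_B} (1/K)·Σ_{k=1}^K L(μ_k, λ) + ε holds for some ε ≥ 0. Then the averaged policy μ̄ = (1/K)·Σ_{k=1}^K μ_k lies in P and, for every μ ∈ P, inf_{λ ∈ Λ_B} L(μ, λ) ≤ inf_{λ ∈ Λ_B} L(μ̄, λ) + ε (i.e., μ̄ is ε-optimal for the bounded sup-inf problem). -/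

import Mathlib

/-!
By Jensen's inequality for the concave functions `L(·, λ)`, the average of the `L(μ_k, λ)` is at
most `L(μ̄, λ)`, so the infimum in the regret bound is at most `inf_λ L(μ̄, λ)`. On the other side,
`inf_λ L(ν, λ) ≤ L(ν, λ_k) ≤ L(μ_k, λ_k)` for every `k`, and averaging over `k` bounds
`inf_λ L(ν, λ)` by the left-hand side of the regret bound. Boundedness of `Λ_B` makes these
infima finite; the real infimum of a family unbounded below would be the junk value `0`.
-/

theorem concaveOn_affineMap {𝕜 E β : Type*} [Ring 𝕜] [PartialOrder 𝕜] [AddCommGroup E]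
    [Module 𝕜 E] [AddCommGroup β] [PartialOrder β] [Module 𝕜 β] {s : Set E} (f : E →ᵃ[𝕜] β)
    (hs : Convex 𝕜 s) : ConcaveOn 𝕜 s f :=
  ⟨hs, fun _ _ _ _ _ _ _ _ hab => (Convex.combo_affine_apply hab).ge⟩

section WeightedSums

variable {ι V Λ : Type*} {t : Finset ι} {w : ι → ℝ} {S : Set Λ}

theorem ciInf_le_weighted_sum {f : Λ → ℝ} {lam : ι → Λ} (hf : BddBelow (f '' S))
    (hw₀ : ∀ i ∈ t, 0 ≤ w i) (hw₁ : ∑ i ∈ t, w i = 1) (hlam : ∀ i ∈ t, lam i ∈ S) :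
    ⨅ l : S, f l ≤ ∑ i ∈ t, w i * f (lam i) :=
  (convex_Ici (⨅ l : S, f l)).sum_mem hw₀ hw₁ fun i hi => ciInf_set_le hf (hlam i hi)

theorem bddBelow_image_weighted_sum {g : ι → Λ → ℝ} (hw₀ : ∀ i ∈ t, 0 ≤ w i)
    (hg : ∀ i ∈ t, BddBelow (g i '' S)) :
    BddBelow ((fun l => ∑ i ∈ t, w i * g i l) '' S) := by
  refine ⟨∑ i ∈ t, w i * ⨅ l : S, g i l, ?_⟩
  rintro _ ⟨l, hl, rfl⟩
  exact Finset.sum_le_sum fun i hi =>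
    mul_le_mul_of_nonneg_left (ciInf_set_le (hg i hi) hl) (hw₀ i hi)

variable [AddCommGroup V] [Module ℝ V] {P : Set V} {L : V → Λ → ℝ} {x : ι → V}

theorem ciInf_weighted_sum_le_ciInf_of_concaveOn
    (hconc : ∀ l ∈ S, ConcaveOn ℝ P (L · l)) (hbdd : ∀ ν ∈ P, BddBelow (L ν '' S))
    (hw₀ : ∀ i ∈ t, 0 ≤ w i) (hw₁ : ∑ i ∈ t, w i = 1) (hx : ∀ i ∈ t, x i ∈ P) :
    ⨅ l : S, ∑ i ∈ t, w i * L (x i) l ≤ ⨅ l : S, L (∑ i ∈ t, w i • x i) l := by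
  refine ciInf_mono ?_ fun l => (hconc l l.2).le_map_sum hw₀ hw₁ hx
  rw [← Set.image_eq_range fun l => ∑ i ∈ t, w i * L (x i) l]
  exact bddBelow_image_weighted_sum hw₀ fun i hi => hbdd _ (hx i hi)

theorem regret_to_subopt_exact_general {lam : ι → Λ} {ε : ℝ}
    (hconc : ∀ l ∈ S, ConcaveOn ℝ P (L · l)) (hbdd : ∀ ν ∈ P, BddBelow (L ν '' S))
    (hw₀ : ∀ i ∈ t, 0 ≤ w i) (hw₁ : ∑ i ∈ t, w i = 1)
    (hx : ∀ i ∈ t, x i ∈ P) (hlam : ∀ i ∈ t, lam i ∈ S)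
    (hopt : ∀ i ∈ t, ∀ ν ∈ P, L ν (lam i) ≤ L (x i) (lam i))
    (hregret : ∑ i ∈ t, w i * L (x i) (lam i) ≤ (⨅ l : S, ∑ i ∈ t, w i * L (x i) l) + ε) :
    ∑ i ∈ t, w i • x i ∈ P ∧
      ∀ ν ∈ P, ⨅ l : S, L ν l ≤ (⨅ l : S, L (∑ i ∈ t, w i • x i) l) + ε := by
  obtain ⟨j, hj⟩ : t.Nonempty := Finset.nonempty_of_sum_ne_zero (hw₁ ▸ one_ne_zero)
  refine ⟨(hconc _ (hlam j hj)).1.sum_mem hw₀ hw₁ hx, fun ν hν => ?_⟩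
  calc ⨅ l : S, L ν l
      ≤ ∑ i ∈ t, w i * L ν (lam i) := ciInf_le_weighted_sum (hbdd ν hν) hw₀ hw₁ hlam
    _ ≤ ∑ i ∈ t, w i * L (x i) (lam i) := Finset.sum_le_sum fun i hi =>
        mul_le_mul_of_nonneg_left (hopt i hi ν hν) (hw₀ i hi)
    _ ≤ (⨅ l : S, ∑ i ∈ t, w i * L (x i) l) + ε := hregret
    _ ≤ (⨅ l : S, L (∑ i ∈ t, w i • x i) l) + ε :=
        add_le_add_left
          (ciInf_weighted_sum_le_ciInf_of_concaveOn hconc hbdd hw₀ hw₁ hx) ε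

end WeightedSums

section Lagrangian

variable {V : Type*}

/-- The Lagrangian of maximizing `Ro` subject to `ρ ≤ Rc` and `1 - δ ≤ Rf`; the multiplier pair `l`
is `(λ^c, λ^f)`. -/
def lagrangian (Ro Rc Rf : V → ℝ) (ρ δ : ℝ) (μ : V) (l : ℝ × ℝ) : ℝ :=
  Ro μ + l.1 * (Rc μ - ρ) + l.2 * (Rf μ - (1 - δ))

/-- The set `Λ_B` of admissible multiplier pairs: nonnegative, with sum at most `B`. -/
def boundedMultipliers (B : ℝ) : Set (ℝ × ℝ) :=
  {l | 0 ≤ l.1 ∧ 0 ≤ l.2 ∧ l.1 + l.2 ≤ B}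

theorem isBounded_boundedMultipliers (B : ℝ) : Bornology.IsBounded (boundedMultipliers B) :=
  (Metric.isBounded_Icc (0, 0) (B, B)).subset
    fun _ ⟨h₁, h₂, h⟩ => ⟨⟨h₁, h₂⟩, by linarith, by linarith⟩

theorem bddBelow_image_lagrangian {S : Set (ℝ × ℝ)} (Ro Rc Rf : V → ℝ) (ρ δ : ℝ) (μ : V)
    (hS : Bornology.IsBounded S) : BddBelow (lagrangian Ro Rc Rf ρ δ μ '' S) := by
  have hcont : Continuous (lagrangian Ro Rc Rf ρ δ μ) := by
    unfold lagrangian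
    fun_prop
  exact (hS.isCompact_closure.bddBelow_image hcont.continuousOn).mono
    (Set.image_mono subset_closure)

variable [AddCommGroup V] [Module ℝ V] {P : Set V}

theorem concaveOn_lagrangian {Ro Rc Rf : V → ℝ} (ρ δ : ℝ) {l : ℝ × ℝ} (hRo : ConcaveOn ℝ P Ro)
    (hRc : ConcaveOn ℝ P Rc) (hRf : ConcaveOn ℝ P Rf) (hl₁ : 0 ≤ l.1) (hl₂ : 0 ≤ l.2) :
    ConcaveOn ℝ P (lagrangian Ro Rc Rf ρ δ · l) :=
  (hRo.add ((hRc.sub (convexOn_const ρ hRc.1)).smul hl₁)).add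
    ((hRf.sub (convexOn_const (1 - δ) hRf.1)).smul hl₂)

end Lagrangian

/-- **Regret-to-suboptimality conversion with exact maximizers**
(core of the proof of Theorem 2).  If each `μ_k` exactly maximizes `L(·, λ_k)` over `P`
and the iterates satisfy the average-regret bound `ε` over `Λ_B`, then the averaged
policy `μ̄ = (1/K) ∑ μ_k` lies in `P` and is `ε`-optimal for the bounded sup-inf
problem. -/
theorem regret_to_subopt_exact
    {V : Type*} [AddCommGroup V] [Module ℝ V]
    (P : Set V) (hPne : P.Nonempty) (hPconv : Convex ℝ P)
    (Ro Rc Rf : V →ᵃ[ℝ] ℝ)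
    (ρ δ B : ℝ) (hB : 0 < B)
    (L : V → ℝ × ℝ → ℝ)
    (hL : ∀ μ lam, L μ lam = Ro μ + lam.1 * (Rc μ - ρ) + lam.2 * (Rf μ - (1 - δ)))
    (ΛB : Set (ℝ × ℝ))
    (hΛB : ΛB = {lam : ℝ × ℝ | 0 ≤ lam.1 ∧ 0 ≤ lam.2 ∧ lam.1 + lam.2 ≤ B})
    (K : ℕ) (hK : 1 ≤ K) (ε : ℝ) (hε : 0 ≤ ε)
    (μ : ℕ → V) (lam : ℕ → ℝ × ℝ)
    (hμP : ∀ k ∈ Finset.Icc 1 K, μ k ∈ P)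
    (hlamB : ∀ k ∈ Finset.Icc 1 K, lam k ∈ ΛB)
    (hμopt : ∀ k ∈ Finset.Icc 1 K, ∀ ν ∈ P, L ν (lam k) ≤ L (μ k) (lam k))
    (hregret : (K : ℝ)⁻¹ * ∑ k ∈ Finset.Icc 1 K, L (μ k) (lam k) ≤
        (⨅ l : ΛB, (K : ℝ)⁻¹ * ∑ k ∈ Finset.Icc 1 K, L (μ k) (l : ℝ × ℝ)) + ε)
    (μbar : V) (hμbar : μbar = (K : ℝ)⁻¹ • ∑ k ∈ Finset.Icc 1 K, μ k) :
    μbar ∈ P ∧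
    ∀ ν ∈ P, (⨅ l : ΛB, L ν (l : ℝ × ℝ)) ≤ (⨅ l : ΛB, L μbar (l : ℝ × ℝ)) + ε := by
  obtain rfl : L = lagrangian Ro Rc Rf ρ δ := funext₂ hL
  obtain rfl : ΛB = boundedMultipliers B := hΛB
  have hconc : ∀ l ∈ boundedMultipliers B, ConcaveOn ℝ P (lagrangian Ro Rc Rf ρ δ · l) :=
    fun l hl => concaveOn_lagrangian ρ δ (concaveOn_affineMap Ro hPconv)
      (concaveOn_affineMap Rc hPconv) (concaveOn_affineMap Rf hPconv) hl.1 hl.2.1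
  have hbdd : ∀ ν ∈ P, BddBelow (lagrangian Ro Rc Rf ρ δ ν '' boundedMultipliers B) :=
    fun ν _ => bddBelow_image_lagrangian Ro Rc Rf ρ δ ν (isBounded_boundedMultipliers B)
  have hweights : ∑ _k ∈ Finset.Icc 1 K, (K : ℝ)⁻¹ = 1 := by
    simp [Nat.ne_zero_of_lt hK]
  simp only [Finset.mul_sum] at hregret
  rw [hμbar, Finset.smul_sum]
  exact regret_to_subopt_exact_general hconc hbdd (fun _ _ => by positivity) hweights
    hμP hlamB hμopt hregret
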